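/- arXiv:0710.3584 — 3 statements merged into one kernel-verified Lean document; each statement's English description precedes it below -/
import Mathlib

section
/- Let β = 2 + √7, the Pisot root of X² − 4X − 3 (so that N(β) = −3). Then γ(β) = 0; that is, sSup { v ∈ [0,1] : every rational x with 0 < x ≤ v whose reduced denominator is coprime to 3 satisfies T_β^ℓ(x) = x for some ℓ ≥ 1 } = 0. Equivalently, for every ε > 0 there exists a rational x ∈ (0, ε] whose reduced denominator is not divisible by 3 and such that T_β^ℓ(x) ≠ x for all ℓ ≥ 1. -/
/-!
Write `β = 2 + √7` and `β' = 2 - √7 ∈ (-1, 0)`. The rationals `x = 1 / q` with `q = 81 k + 7`,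
`k` a natural number, are arbitrarily small, have denominator prime to `3`, and none of them is a
periodic point.

The orbit of `x` stays in `q⁻¹ ℤ[β]`. If `y = (u + v β) / q` and `d = ⌊β y⌋ ∈ {0, …, 4}`, then
`T y = (u₁ + v₁ β) / q` with `u₁ = 3 v - d q` and `v₁ = u + 4 v`, while the conjugate
`c = (u + v β') / q` moves to `β' c - d`. Since `|β'| < 0.65`, the interval `[-7, 4.6]` is
invariant for the conjugate, so it contains the conjugate of every point of the orbit
(`OrbitData`, `OrbitData.step`).

If `x` were periodic, it could be reached after at least four steps. The relation
`u₁ ≡ -d q (mod 3)` determines `d` modulo `3`, and the only digit congruent to `2` is `2` itself.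
The class of `q` modulo `81` is that of `(β - 1) / 2` modulo `β ^ 4` (where `β ≡ 15`), so that `x`
agrees modulo `β ^ 4` with the fixed point `2 / (β - 1)` of digit `2`; hence each of the last four
digits before `x` is `2`. Going back four steps with digit `2` from the conjugate `x` gives
a conjugate larger than `4.6`, a contradiction (`no_return`).
-/

noncomputable section

/-- The β-transformation `x ↦ fract (β x)`. -/
def betaMap (β : ℝ) : ℝ → ℝ := fun x => Int.fract (β * x)

/-- `q * y = u + v β` is an element of `ℤ[β]` whose conjugate `u + v β'` lies in
`[-7 q, 4.6 q]`, and `y ∈ [0, 1)`. -/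
def OrbitData (q : ℤ) (y : ℝ) (u v : ℤ) : Prop :=
  q * y = u + v * (2 + √7) ∧ -7 * (q : ℝ) ≤ u + v * (2 - √7) ∧
    u + v * (2 - √7) ≤ 4.6 * (q : ℝ) ∧ 0 ≤ y ∧ y < 1

lemma sqrt_seven_bounds : 2.64 < √7 ∧ √7 < 2.65 := by
  constructor
  · exact Real.lt_sqrt_of_sq_lt (by norm_num)
  · exact (Real.sqrt_lt' (by norm_num)).2 (by norm_num)

lemma sq_sqrt_seven : √7 * √7 = 7 := Real.mul_self_sqrt (by norm_num)

lemma OrbitData.step {q : ℤ} (hq : 0 < q) {y : ℝ} {u v : ℤ} (h : OrbitData q y u v) :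
    ∃ d : ℤ, 0 ≤ d ∧ d ≤ 4 ∧
      OrbitData q (betaMap (2 + √7) y) (3 * v - d * q) (u + 4 * v) := by
  obtain ⟨hy, hl, hu, h0, h1⟩ := h
  obtain ⟨s1, s2⟩ := sqrt_seven_bounds
  have ss := sq_sqrt_seven
  have hq' : (0 : ℝ) < q := by exact_mod_cast hq
  have hd0 : 0 ≤ ⌊(2 + √7) * y⌋ := Int.floor_nonneg.2 (by positivity)
  have hd4 : ⌊(2 + √7) * y⌋ ≤ 4 := by
    refine Int.lt_add_one_iff.1 (Int.floor_lt.2 ?_)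
    push_cast
    nlinarith
  refine ⟨_, hd0, hd4, ?_, ?_, ?_, Int.fract_nonneg _, Int.fract_lt_one _⟩
  all_goals generalize hd : ⌊(2 + √7) * y⌋ = d at *
  · have hT : betaMap (2 + √7) y = (2 + √7) * y - d := by
      rw [← hd]; rfl
    rw [hT]
    push_cast
    linear_combination (2 + √7) * hy + v * ss
  all_goals
    have e : (((3 * v - d * q : ℤ) : ℝ) + ((u + 4 * v : ℤ) : ℝ) * (2 - √7))
        = (2 - √7) * (u + v * (2 - √7)) - d * q := by
      push_cast
      linear_combination (- (v : ℝ)) * ss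
    rw [e]
    generalize (u : ℝ) + v * (2 - √7) = c at *
    have hd0' : (0 : ℝ) ≤ d := by exact_mod_cast hd0
    have hd4' : (d : ℝ) ≤ 4 := by exact_mod_cast hd4
    have hdq : (d : ℝ) * q ≤ 4 * q := by gcongr
    have hdq0 : (0 : ℝ) ≤ d * q := by positivity
  · nlinarith [mul_le_mul_of_nonneg_left hu (by linarith : (0 : ℝ) ≤ √7 - 2)]
  · nlinarith [mul_le_mul_of_nonneg_left hl (by linarith : (0 : ℝ) ≤ √7 - 2)]

lemma OrbitData.iterate {q : ℤ} (hq : 0 < q) {y : ℝ} {u v : ℤ} (h : OrbitData q y u v) (n : ℕ) :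
    ∃ u' v' : ℤ, OrbitData q ((betaMap (2 + √7))^[n] y) u' v' := by
  induction n with
  | zero => exact ⟨u, v, h⟩
  | succ n ih =>
    obtain ⟨u', v', h'⟩ := ih
    obtain ⟨d, -, -, h''⟩ := h'.step hq
    rw [Function.iterate_succ_apply']
    exact ⟨_, _, h''⟩

lemma eq_of_add_mul_eq_one {u v : ℤ} (h : (u : ℝ) + v * (2 + √7) = 1) : u = 1 ∧ v = 0 := by
  have hirr : Irrational √7 := by
    simpa using Nat.Prime.irrational_sqrt (p := 7) (by norm_num)
  have hv : v = 0 := by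
    by_contra hv
    refine (hirr.intCast_mul hv).ne_int (1 - u - 2 * v) ?_
    push_cast
    linarith
  subst hv
  refine ⟨?_, rfl⟩
  have : (u : ℝ) = 1 := by simpa using h
  exact_mod_cast this

/-- With `q = 81 k + 7`, four steps of the orbit never lead to `1 / q`. -/
lemma no_return {k : ℤ} (hk : 0 ≤ k) {y : ℝ} {u v : ℤ} (h : OrbitData (81 * k + 7) y u v)
    (hret : ((81 * k + 7 : ℤ) : ℝ) * (betaMap (2 + √7))^[4] y = 1) : False := by
  have hq : 0 < 81 * k + 7 := by omega
  obtain ⟨d1, l1, m1, h1⟩ := h.step hq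
  obtain ⟨d2, l2, m2, h2⟩ := h1.step hq
  obtain ⟨d3, l3, m3, h3⟩ := h2.step hq
  obtain ⟨d4, l4, m4, h4⟩ := h3.step hq
  have e := h4.1
  change _ * (betaMap (2 + √7))^[4] y = _ at e
  rw [hret] at e
  obtain ⟨eu, ev⟩ := eq_of_add_mul_eq_one e.symm
  have hd4 : d4 = 2 := by interval_cases d4 <;> omega
  subst hd4
  have hd3 : d3 = 2 := by interval_cases d3 <;> omega
  subst hd3
  have hd2 : d2 = 2 := by interval_cases d2 <;> omega
  subst hd2
  have hd1 : d1 = 2 := by interval_cases d1 <;> omega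
  subst hd1
  have hv : v = -8 - 80 * k := by omega
  have hu : u = 41 + 416 * k := by omega
  subst hv hu
  have hc := h.2.2.1
  obtain ⟨s1, s2⟩ := sqrt_seven_bounds
  have hk' : (0 : ℝ) ≤ k := by exact_mod_cast hk
  push_cast at hc
  nlinarith

/-- For a natural number `k`, the point `1 / (81 k + 7)` is not periodic. -/
lemma not_periodic (k : ℕ) (l : ℕ) (hl : 1 ≤ l) :
    (betaMap (2 + √7))^[l] (1 / (81 * k + 7)) ≠ 1 / (81 * k + 7) := by
  intro hper
  have hk : (0 : ℝ) ≤ k := k.cast_nonneg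
  have hq : (0 : ℝ) < 81 * k + 7 := by positivity
  have h0 : OrbitData (81 * k + 7) (1 / (81 * k + 7)) 1 0 := by
    refine ⟨?_, ?_, ?_, by positivity, ?_⟩
    · push_cast
      field_simp
      ring
    · push_cast; nlinarith
    · push_cast; nlinarith
    · rw [div_lt_one hq]; linarith
  obtain ⟨u, v, h⟩ := h0.iterate (by omega) (l * 4 - 4)
  refine no_return (by omega) h ?_
  -- `l * 4` is a period too, and it leaves room for four backward steps.
  rw [← Function.iterate_add_apply, show 4 + (l * 4 - 4) = l * 4 by omega, Function.iterate_mul,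
    Function.iterate_fixed hper]
  push_cast
  field_simp

/-- For `β = 2 + √7` (the Pisot root of `X² - 4X - 3`, of norm `-3`), one has `γ(β) = 0`:
the supremum of the set of `v ∈ [0,1]` such that every rational `x ∈ (0, v]` whose reduced
denominator is coprime to `3` has purely periodic β-expansion, is `0`. -/
theorem gamma_two_add_sqrt_seven_eq_zero :
    sSup {v : ℝ | v ∈ Set.Icc (0 : ℝ) 1 ∧
      ∀ x : ℚ, 0 < x → (x : ℝ) ≤ v → Int.gcd (x.den : ℤ) 3 = 1 →
        ∃ ℓ : ℕ, 1 ≤ ℓ ∧ (betaMap (2 + Real.sqrt 7))^[ℓ] (x : ℝ) = (x : ℝ)} = 0 := by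
  refine IsGreatest.csSup_eq ⟨⟨by simp, ?_⟩, ?_⟩
  · intro x hx hx'
    have : x ≤ 0 := by exact_mod_cast hx'
    exact absurd hx this.not_gt
  · rintro v ⟨-, hv⟩
    by_contra! hpos
    obtain ⟨k, hk⟩ := exists_nat_gt (1 / v)
    have hk0 : (0 : ℝ) ≤ k := k.cast_nonneg
    have hcast : (((1 / ((81 * k + 7 : ℕ) : ℚ)) : ℚ) : ℝ) = 1 / (81 * k + 7) := by push_cast; rfl
    have hden : (1 / ((81 * k + 7 : ℕ) : ℚ)).den = 81 * k + 7 := by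
      rw [one_div, Rat.inv_natCast_den]
      simp
    obtain ⟨l, hl, hper⟩ := hv (1 / ((81 * k + 7 : ℕ) : ℚ)) (by positivity) (by
        rw [hcast, one_div_le (by positivity) hpos]
        linarith) (by
        rw [hden]
        have h3 : ¬ (3 : ℕ) ∣ 81 * k + 7 := by omega
        exact ((Nat.Prime.coprime_iff_not_dvd Nat.prime_three).2 h3).symm)
    rw [hcast] at hper
    exact not_periodic k l hl hper
end
end

section
/- Let β = 5 + 2√7, the Pisot root of X² − 10X − 3 (so that N(β) = −3). Then γ(β) = (7 − √7)/12; that is, sSup { v ∈ [0,1] : every rational x with 0 < x ≤ v whose reduced denominator is coprime to 3 satisfies T_β^ℓ(x) = x for some ℓ ≥ 1 } = (7 − √7)/12. -/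
noncomputable section

/-!
Write `β = 5 + 2√7`, let `β' = 5 - 2√7 = -b` be its conjugate, and `u = (7 - √7)/12`. For a
denominator `q`, the module `q⁻¹ ℤ[β]` is stable under `T = T_β` on `[0,1)`. A point `x` moves
by `x ↦ βx - d`, its conjugate `y` by `y ↦ β'y - d = -by - d`, with a digit `0 ≤ d ≤ 10`. The
interval `[lo, hi]`, where `lo = -10/(1-b²)` and `hi = 10b/(1-b²)`, attracts the conjugates:
the distance to it shrinks by the factor `b < 1` at each step (`cnj_step_mem`).

*Every rational `0 < x < u` with denominator `q` prime to `3` is periodic.* As `β` is invertible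
modulo `q`, for every `n` there is `w ∈ q⁻¹ ℤ[β] ∩ [0,1)` with conjugate in `[-11, 1]` such that
`T^n w ≡ x` modulo `ℤ[β]` (`exists_start`). The attracting interval leaves only `T^n w = x` and
`T^n w = x + β - 10`. In the second case, if the last digit is `10` then
`T^(n-1) w = 1 + x/β ≥ 1`, which is absurd; if it is at most `9` then the conjugate `x - 10 - b`
of `T^n w` is at least `lo + 1 - b^n`, that is `x ≥ u - b^n`, absurd for large `n`
(`iterate_eq`). So `T^n w = x` for all large `n`, where `w` ranges over a finite set, and by
pigeonhole `x` is periodic.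

*For `v > u` some such `x ≤ v` is not periodic.* One has `u = -2 + b (8 + b u)`. Since
`ℤ[β]/β^n` is generated by `1`, there is `x ∈ (u, v)` with denominator a power of `2` which is
congruent to `-(2 + 8β)(1 + β² + ⋯ + β^(2N-2))` modulo `β^(2N)`. If `x` were periodic, its
backward orbit would have its first `2N` digits congruent to `2` modulo `3`, and boundedness of
the conjugates would force them to be `2, 8, 2, 8, …`. Then `y - u` is multiplied by `b⁻²` at
every two steps backwards, which is incompatible with boundedness when `N` is large
(`growth`).
-/

/-! ### The module `q⁻¹ ℤ[β]` and the β-transformation on it -/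

/-- The order `ℤ[β]`, with `ω = β` satisfying `ω² = 3 + 10 ω`. -/
abbrev ZBeta := QuadraticAlgebra ℤ 3 10

/-- The generator `β` of `ZBeta`. -/
def om : ZBeta := ⟨0, 1⟩

/-- The real number represented by `z / q`. -/
def val (q : ℤ) (z : ZBeta) : ℝ := (z.re + z.im * (5 + 2 * √7)) / q

/-- The conjugate of the real number represented by `z / q`. -/
def cnj (q : ℤ) (z : ZBeta) : ℝ := (z.re + z.im * (5 - 2 * √7)) / q

/-- The digit produced by the β-transformation at `z / q`. -/
def dig (q : ℤ) (z : ZBeta) : ℤ := ⌊(5 + 2 * √7) * val q z⌋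

/-- The β-transformation on numerators: `z ↦ ω z - q d` with `d` the digit. -/
def step (q : ℤ) (z : ZBeta) : ZBeta := ⟨3 * z.im - q * dig q z, z.re + 10 * z.im⟩

lemma s7_sq : √7 * √7 = (7 : ℝ) := Real.mul_self_sqrt (by norm_num)

lemma s7_lt : √7 < (2.64576 : ℝ) := by
  rw [Real.sqrt_lt' (by norm_num)]; norm_num

lemma lt_s7 : (2.64575 : ℝ) < √7 := by
  apply Real.lt_sqrt_of_sq_lt; norm_num

lemma val_step_eq {q : ℤ} (hq : 0 < q) (z : ZBeta) :
    val q (step q z) = (5 + 2 * √7) * val q z - dig q z := by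
  have : (q : ℝ) ≠ 0 := by exact_mod_cast hq.ne'
  have h := s7_sq
  simp only [val, step]
  push_cast
  field_simp
  linear_combination (-4 * (z.im : ℝ)) * h

lemma val_step {q : ℤ} (hq : 0 < q) (z : ZBeta) :
    val q (step q z) = betaMap (5 + 2 * √7) (val q z) := by
  rw [val_step_eq hq, betaMap, Int.fract, dig]

lemma cnj_step_eq {q : ℤ} (hq : 0 < q) (z : ZBeta) :
    cnj q (step q z) = (5 - 2 * √7) * cnj q z - dig q z := by
  have : (q : ℝ) ≠ 0 := by exact_mod_cast hq.ne'
  have h := s7_sq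
  simp only [cnj, step]
  push_cast
  field_simp
  linear_combination (-4 * (z.im : ℝ)) * h

lemma val_iter {q : ℤ} (hq : 0 < q) (n : ℕ) (z : ZBeta) :
    val q ((step q)^[n] z) = (betaMap (5 + 2 * √7))^[n] (val q z) := by
  induction n generalizing z with
  | zero => rfl
  | succ n ih => rw [Function.iterate_succ_apply, Function.iterate_succ_apply, ih, val_step hq]

lemma val_step_mem {q : ℤ} (hq : 0 < q) (z : ZBeta) :
    0 ≤ val q (step q z) ∧ val q (step q z) < 1 := by
  rw [val_step hq]
  exact ⟨Int.fract_nonneg _, Int.fract_lt_one _⟩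

lemma val_iter_mem {q : ℤ} (hq : 0 < q) (n : ℕ) (z : ZBeta)
    (h : 0 ≤ val q z ∧ val q z < 1) :
    0 ≤ val q ((step q)^[n] z) ∧ val q ((step q)^[n] z) < 1 := by
  cases n with
  | zero => exact h
  | succ n => rw [Function.iterate_succ_apply']; exact val_step_mem hq _

lemma dig_mem {q : ℤ} {z : ZBeta} (h : 0 ≤ val q z ∧ val q z < 1) :
    0 ≤ dig q z ∧ dig q z ≤ 10 := by
  have h1 := s7_lt
  have h2 := lt_s7
  constructor
  · exact Int.floor_nonneg.2 (by nlinarith)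
  · apply Int.le_of_lt_add_one
    rw [dig, Int.floor_lt]
    push_cast
    nlinarith

/-- The conjugates are attracted by `[lo, hi]`, with `lo = -(65 + 25√7)/12` and
`hi = (25 + 5√7)/12`, at the rate `b = 2√7 - 5`. -/
lemma cnj_step_mem {q : ℤ} (hq : 0 < q) {z : ZBeta} (h : 0 ≤ val q z ∧ val q z < 1) {δ : ℝ}
    (hl : -(65 + 25 * √7) / 12 - δ ≤ cnj q z) (hu : cnj q z ≤ (25 + 5 * √7) / 12 + δ) :
    -(65 + 25 * √7) / 12 - (2 * √7 - 5) * δ ≤ cnj q (step q z) ∧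
      cnj q (step q z) ≤ (25 + 5 * √7) / 12 + (2 * √7 - 5) * δ := by
  obtain ⟨d0, d1⟩ := dig_mem h
  have d0' : (0 : ℝ) ≤ dig q z := by exact_mod_cast d0
  have d1' : (dig q z : ℝ) ≤ 10 := by exact_mod_cast d1
  have h1 := s7_lt
  have h2 := lt_s7
  have hs := s7_sq
  rw [cnj_step_eq hq]
  have e1 := mul_le_mul_of_nonneg_left hl (show 0 ≤ 2 * √7 - 5 by linarith)
  have e2 := mul_le_mul_of_nonneg_left hu (show 0 ≤ 2 * √7 - 5 by linarith)
  constructor <;> nlinarith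

lemma cnj_iter_mem {q : ℤ} (hq : 0 < q) {z : ZBeta} (h : 0 ≤ val q z ∧ val q z < 1) {δ : ℝ}
    (hl : -(65 + 25 * √7) / 12 - δ ≤ cnj q z) (hu : cnj q z ≤ (25 + 5 * √7) / 12 + δ) (n : ℕ) :
    -(65 + 25 * √7) / 12 - (2 * √7 - 5) ^ n * δ ≤ cnj q ((step q)^[n] z) ∧
      cnj q ((step q)^[n] z) ≤ (25 + 5 * √7) / 12 + (2 * √7 - 5) ^ n * δ := by
  induction n with
  | zero => simpa using ⟨by linarith, by linarith⟩
  | succ n ih =>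
    rw [Function.iterate_succ_apply']
    have := cnj_step_mem hq (val_iter_mem hq n z h) ih.1 ih.2
    rwa [← mul_assoc, ← pow_succ'] at this

/-! ### Rationals below `u` are periodic -/

/-- Every class modulo `q` is hit by `step^n` applied to a suitable class, because `ω` is
invertible modulo `q`. -/
lemma exists_class {q t : ℤ} (ht : q ∣ 3 * t - 1) (n : ℕ) (p : ZBeta) :
    ∃ w0 : ZBeta, ∀ w : ZBeta, q ∣ w.re - w0.re → q ∣ w.im - w0.im →
      q ∣ ((step q)^[n] w).re - p.re ∧ q ∣ ((step q)^[n] w).im - p.im := by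
  induction n with
  | zero => exact ⟨p, fun w h1 h2 => ⟨h1, h2⟩⟩
  | succ n ih =>
    obtain ⟨w1, hw1⟩ := ih
    refine ⟨⟨w1.im - 10 * (t * w1.re), t * w1.re⟩, fun w h1 h2 => ?_⟩
    rw [Function.iterate_succ_apply]
    simp only at h1 h2
    obtain ⟨c, hc⟩ := ht
    obtain ⟨c1, hc1⟩ := h1
    obtain ⟨c2, hc2⟩ := h2
    apply hw1
    · exact ⟨3 * c2 + w1.re * c - dig q w, by
        simp only [step]; linear_combination 3 * hc2 + w1.re * hc⟩
    · exact ⟨c1 + 10 * c2, by simp only [step]; linear_combination hc1 + 10 * hc2⟩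

/-- A class modulo `q` contains an element with value in `[0,1)` and bounded conjugate. -/
lemma exists_rep {q : ℤ} (hq : 0 < q) (w0 : ZBeta) :
    ∃ w : ZBeta, q ∣ w.re - w0.re ∧ q ∣ w.im - w0.im ∧ (0 ≤ val q w ∧ val q w < 1) ∧
      -11 ≤ cnj q w ∧ cnj q w ≤ 1 := by
  have hq' : (0 : ℝ) < q := by exact_mod_cast hq
  have h1 := s7_lt
  have h2 := lt_s7
  set k : ℤ := w0.im / q with hk
  have hr0 := Int.emod_nonneg w0.im hq.ne'
  have hr1 := Int.emod_lt_of_pos w0.im hq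
  have hr := Int.mul_ediv_add_emod w0.im q
  set i : ℤ := w0.im % q
  set m : ℤ := ⌊val q ⟨w0.re, i⟩⌋ with hm
  have hf0 := Int.floor_le (val q ⟨w0.re, i⟩)
  have hf1 := Int.lt_floor_add_one (val q ⟨w0.re, i⟩)
  rw [← hm] at hf0 hf1
  have hv : val q ⟨w0.re - q * m, i⟩ = val q ⟨w0.re, i⟩ - m := by
    simp only [val]; push_cast; field_simp; ring
  have hd : cnj q ⟨w0.re - q * m, i⟩ = val q ⟨w0.re - q * m, i⟩ - (i / q) * (4 * √7) := by
    simp only [val, cnj]; push_cast; field_simp; ring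
  have hi0 : (0 : ℝ) ≤ i / q := div_nonneg (by exact_mod_cast hr0) hq'.le
  have hi1 : (i : ℝ) / q ≤ 1 := by
    rw [div_le_one hq']; exact_mod_cast hr1.le
  refine ⟨⟨w0.re - q * m, i⟩, ⟨-m, by ring⟩, ⟨-k, by simp only; linarith⟩, ?_, ?_, ?_⟩
  · rw [hv]; constructor <;> linarith
  · rw [hd, hv]; nlinarith
  · rw [hd, hv]; nlinarith

/-- Starting points whose `n`-th iterate is congruent to `P / q` modulo `ℤ[β]`. -/
lemma exists_start {q t : ℤ} (hq : 0 < q) (ht : q ∣ 3 * t - 1) (P : ℤ) (n : ℕ) :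
    ∃ w : ZBeta, (0 ≤ val q w ∧ val q w < 1) ∧ (-11 ≤ cnj q w ∧ cnj q w ≤ 1) ∧
      q ∣ ((step q)^[n] w).re - P ∧ q ∣ ((step q)^[n] w).im := by
  obtain ⟨w0, h0⟩ := exists_class ht n ⟨P, 0⟩
  obtain ⟨w, a, b, c, d⟩ := exists_rep hq w0
  refine ⟨w, c, d, ?_⟩
  simpa using h0 w a b

/-- For large `n`, the congruence of the `n`-th iterate with `P / q` is an equality. -/
lemma iterate_eq {q P : ℤ} (hq : 0 < q) {w : ZBeta} {n : ℕ}
    (hx0 : 0 < (P : ℝ) / q) (hw : 0 ≤ val q w ∧ val q w < 1)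
    (hc : -11 ≤ cnj q w ∧ cnj q w ≤ 1)
    (hn1 : (2 * √7 - 5) ^ n < 0.01) (hn2 : (2 * √7 - 5) ^ n < (7 - √7) / 12 - P / q)
    (hre : q ∣ ((step q)^[n + 1] w).re - P) (him : q ∣ ((step q)^[n + 1] w).im) :
    (betaMap (5 + 2 * √7))^[n + 1] (val q w) = P / q := by
  have h1 := s7_lt
  have h2 := lt_s7
  have hs := s7_sq
  have hq' : (0 : ℝ) < q := by exact_mod_cast hq
  set δ := (2 * √7 - 5) ^ n with hδ
  have hδ0 : 0 ≤ δ := pow_nonneg (by linarith) n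
  set x : ℝ := (P : ℝ) / q with hx
  have hb := cnj_iter_mem hq hw (δ := 1) (by linarith) (by linarith) n
  rw [← val_iter hq]
  rw [Function.iterate_succ_apply'] at hre him ⊢
  have hz := val_iter_mem hq n w hw
  rw [← hδ] at hb
  set z := (step q)^[n] w
  obtain ⟨m, hm⟩ := hre
  obtain ⟨k, hk⟩ := him
  have hb' := cnj_step_mem hq hz hb.1 hb.2
  have hv := val_step_mem hq z
  have hmR : ((step q z).re : ℝ) = P + q * m := by
    have : (step q z).re = P + q * m := by linarith
    exact_mod_cast this
  have hkR : ((step q z).im : ℝ) = q * k := by exact_mod_cast hk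
  have hX : val q (step q z) = x + m + k * (5 + 2 * √7) := by
    rw [val, hmR, hkR, hx]; field_simp
  have hY : cnj q (step q z) = x + m + k * (5 - 2 * √7) := by
    rw [cnj, hmR, hkR, hx]; field_simp
  have hδb : (2 * √7 - 5) * (δ * 1) ≤ 0.01 := by nlinarith
  have hkl : -1 < k := by
    have : (-1 : ℝ) < k := by nlinarith
    exact_mod_cast this
  have hku : k < 2 := by
    have : (k : ℝ) < 2 := by nlinarith
    exact_mod_cast this
  obtain rfl | rfl : k = 0 ∨ k = 1 := by omega
  · have hm0 : m = 0 := by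
      push_cast at hX
      have a1 : (-1 : ℝ) < m := by linarith
      have a2 : (m : ℝ) < 1 := by linarith
      have a3 : -1 < m := by exact_mod_cast a1
      have a4 : m < 1 := by exact_mod_cast a2
      omega
    rw [hX, hm0]; simp
  · exfalso
    push_cast at hX hY
    have hm0 : m = -10 := by
      have a1 : (-11 : ℝ) < m := by linarith
      have a2 : (m : ℝ) < -9 := by linarith
      have a3 : -11 < m := by exact_mod_cast a1
      have a4 : m < -9 := by exact_mod_cast a2
      omega
    rw [hm0] at hX hY
    push_cast at hX hY
    rw [val_step_eq hq] at hX
    rw [cnj_step_eq hq] at hY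
    obtain ⟨-, hd⟩ := dig_mem hz
    -- The digit `10` would put the previous point at `1 + x/β`, outside `[0,1)`.
    have hd9 : dig q z ≤ 9 := by
      by_contra hcon
      have : dig q z = 10 := by omega
      rw [this] at hX
      push_cast at hX
      nlinarith
    have hd9' : (dig q z : ℝ) ≤ 9 := by exact_mod_cast hd9
    have e2 := mul_le_mul_of_nonneg_left hb.2 (show 0 ≤ 2 * √7 - 5 by linarith)
    nlinarith

lemma periodic_of_lt {q P : ℤ} (hq : 0 < q) (hcop : Int.gcd q 3 = 1)
    (hx0 : 0 < (P : ℝ) / q) (hxu : (P : ℝ) / q < (7 - √7) / 12) :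
    ∃ ℓ : ℕ, 1 ≤ ℓ ∧ (betaMap (5 + 2 * √7))^[ℓ] ((P : ℝ) / q) = (P : ℝ) / q := by
  have h1 := s7_lt
  have h2 := lt_s7
  have hq' : (0 : ℝ) < q := by exact_mod_cast hq
  obtain ⟨t, ht⟩ : ∃ t : ℤ, q ∣ 3 * t - 1 := by
    have := Int.gcd_eq_gcd_ab q 3
    rw [hcop] at this
    exact ⟨Int.gcdB q 3, -Int.gcdA q 3, by push_cast at this; linarith⟩
  obtain ⟨n0, hn0⟩ := exists_pow_lt_of_lt_one
    (show 0 < min (0.01 : ℝ) ((7 - √7) / 12 - P / q) from lt_min (by norm_num) (by linarith))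
    (show 2 * √7 - 5 < 1 by linarith)
  choose w hw hc hre him using fun n : ℕ => exists_start hq ht P (n0 + n + 1)
  have key : ∀ n, (betaMap (5 + 2 * √7))^[n0 + n + 1] (val q (w n)) = P / q := by
    intro n
    have hle : (2 * √7 - 5) ^ (n0 + n) ≤ (2 * √7 - 5) ^ n0 :=
      pow_le_pow_of_le_one (by linarith) (by linarith) (by omega)
    have hlt := lt_of_le_of_lt hle hn0
    exact iterate_eq hq hx0 (hw n) (hc n) (lt_of_lt_of_le hlt (min_le_left _ _))
      (lt_of_lt_of_le hlt (min_le_right _ _)) (hre n) (him n)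
  -- The starting points have numerators in a finite box.
  have hbox : ∀ n, (w n).re ∈ Set.Icc (-23 * q) (23 * q) ∧
      (w n).im ∈ Set.Icc (-2 * q) (2 * q) := by
    intro n
    obtain ⟨a1, a2⟩ := hw n
    obtain ⟨b1, b2⟩ := hc n
    simp only [val, cnj] at a1 a2 b1 b2
    rw [le_div_iff₀ hq'] at a1 b1
    rw [div_lt_iff₀ hq'] at a2
    rw [div_le_iff₀ hq'] at b2
    have c1 : -2 * (q : ℝ) ≤ (w n).im := by nlinarith
    have c2 : ((w n).im : ℝ) ≤ 2 * q := by nlinarith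
    have c3 : -23 * (q : ℝ) ≤ (w n).re := by nlinarith
    have c4 : ((w n).re : ℝ) ≤ 23 * q := by nlinarith
    exact ⟨⟨by exact_mod_cast c3, by exact_mod_cast c4⟩,
      ⟨by exact_mod_cast c1, by exact_mod_cast c2⟩⟩
  obtain ⟨i, j, hij, heq⟩ := Finite.exists_ne_map_eq_of_infinite
    (fun n => ((⟨(w n).re, (hbox n).1⟩, ⟨(w n).im, (hbox n).2⟩) :
      Set.Icc (-23 * q) (23 * q) × Set.Icc (-2 * q) (2 * q)))
  have hww : w i = w j := by
    simp only [Prod.mk.injEq, Subtype.mk.injEq] at heq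
    exact QuadraticAlgebra.ext heq.1 heq.2
  have fin : ∀ i j, i < j → w i = w j →
      ∃ ℓ : ℕ, 1 ≤ ℓ ∧ (betaMap (5 + 2 * √7))^[ℓ] ((P : ℝ) / q) = (P : ℝ) / q := by
    intro i j hlt h
    refine ⟨j - i, by omega, ?_⟩
    conv_lhs => rw [← key i, h]
    rw [← Function.iterate_add_apply, show j - i + (n0 + i + 1) = n0 + j + 1 by omega, key j]
  rcases lt_or_gt_of_ne hij with h | h
  · exact fin i j h hww
  · exact fin j i h hww.symm

/-! ### Periodic orbits and their conjugates -/

lemma val_injective {q : ℤ} (hq : 0 < q) : Function.Injective (val q) := by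
  intro z w h
  have hq' : (q : ℝ) ≠ 0 := by exact_mod_cast hq.ne'
  simp only [val] at h
  rw [div_left_inj' hq'] at h
  have hirr : Irrational √7 := by
    have := Nat.Prime.irrational_sqrt (show Nat.Prime 7 by norm_num)
    simpa using this
  have him : z.im = w.im := by
    by_contra hne
    have hne' : (2 * ((z.im : ℝ) - w.im)) ≠ 0 := by
      have : (z.im : ℝ) ≠ w.im := by exact_mod_cast hne
      exact mul_ne_zero two_ne_zero (sub_ne_zero.2 this)
    apply hirr
    refine ⟨((w.re - z.re + 5 * (w.im - z.im) : ℤ) : ℚ) / ((2 * (z.im - w.im) : ℤ) : ℚ), ?_⟩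
    push_cast
    rw [div_eq_iff hne']
    linear_combination -h
  have hre : z.re = w.re := by
    rw [him] at h
    have : (z.re : ℝ) = w.re := by linarith
    exact_mod_cast this
  exact QuadraticAlgebra.ext hre him

lemma cnj_periodic_mem {q : ℤ} (hq : 0 < q) {z : ZBeta} (h : 0 ≤ val q z ∧ val q z < 1)
    {ℓ : ℕ} (hℓ : 1 ≤ ℓ) (hz : (step q)^[ℓ] z = z) :
    -(65 + 25 * √7) / 12 ≤ cnj q z ∧ cnj q z ≤ (25 + 5 * √7) / 12 := by
  have h1 := s7_lt
  have h2 := lt_s7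
  have hb : (2 * √7 - 5) ^ ℓ < 1 := pow_lt_one₀ (by linarith) (by linarith) (by omega)
  -- The distance from the conjugate to the attracting interval is at most `b ^ ℓ` times itself.
  set δ := max 0 (max (-(65 + 25 * √7) / 12 - cnj q z) (cnj q z - (25 + 5 * √7) / 12)) with hδ
  have d0 : 0 ≤ δ := le_max_left _ _
  have d1 : -(65 + 25 * √7) / 12 - cnj q z ≤ δ := le_trans (le_max_left _ _) (le_max_right _ _)
  have d2 : cnj q z - (25 + 5 * √7) / 12 ≤ δ := le_trans (le_max_right _ _) (le_max_right _ _)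
  obtain ⟨e1, e2⟩ := cnj_iter_mem hq h (δ := δ) (by linarith) (by linarith) ℓ
  rw [hz] at e1 e2
  have e3 : 0 ≤ (2 * √7 - 5) ^ ℓ * δ := mul_nonneg (pow_nonneg (by linarith) _) d0
  have e4 : δ ≤ (2 * √7 - 5) ^ ℓ * δ := by
    conv_lhs => rw [hδ]
    exact max_le e3 (max_le (by linarith) (by linarith))
  have : δ ≤ 0 := by
    by_contra hcon
    push Not at hcon
    nlinarith
  exact ⟨by linarith, by linarith⟩

/-! ### Non-periodic rationals just above `u` -/

lemma om_mul (z : ZBeta) : om * z = ⟨3 * z.im, z.re + 10 * z.im⟩ := by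
  ext <;> simp [om]

lemma om_cancel {z w : ZBeta} (h : om * z = om * w) : z = w := by
  rw [om_mul, om_mul, QuadraticAlgebra.mk.injEq] at h
  ext <;> omega

lemma step_eq (q : ℤ) (z : ZBeta) : step q z = om * z - q * dig q z := by
  rw [om_mul]; ext <;> simp [step]

lemma om_sq : om * (om - 10) = 3 := by
  rw [om_mul]
  ext <;> simp [om, QuadraticAlgebra.re_ofNat, QuadraticAlgebra.im_ofNat]

lemma om_pow_eq (n : ℕ) : ∃ (ε : ℤ) (δ : ZBeta), om ^ n = ε * 3 ^ n + om ^ (n + 1) * δ := by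
  induction n with
  | zero => exact ⟨1, 0, by simp⟩
  | succ n ih =>
    obtain ⟨ε, δ, h⟩ := ih
    have h3 : (3 : ZBeta) ^ n = om ^ n * (om - 10) ^ n := by rw [← mul_pow, om_sq]
    -- `β = -3 + β² - 9β` and `9 = β² (β - 10)²`.
    have h9 : om = -3 + om ^ 2 * (1 - om * (om - 10) ^ 2) := by
      linear_combination (-(1 : ZBeta) + om * (om * (om - 10) + 3)) * om_sq
    refine ⟨-ε, δ + ε * (om - 10) ^ n * (1 - om * (om - 10) ^ 2), ?_⟩
    push_cast
    linear_combination om * h + (ε : ZBeta) * 3 ^ n * h9 +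
      (ε : ZBeta) * om ^ 2 * (1 - om * (om - 10) ^ 2) * h3

/-- The ring `ℤ[β]/β^n` is generated by `1`, as `β` generates a prime of degree one above the
split prime `3`. -/
lemma exists_int_congr (α : ZBeta) (n : ℕ) : ∃ (s : ℤ) (γ : ZBeta), α = s + om ^ n * γ := by
  induction n with
  | zero => exact ⟨0, α, by simp⟩
  | succ n ih =>
    obtain ⟨s, γ, h⟩ := ih
    obtain ⟨ε, δ, h'⟩ := om_pow_eq n
    have hγ : γ = γ.re + om * γ.im := by
      rw [om_mul]; ext <;> simp
    refine ⟨s + γ.re * ε * 3 ^ n, γ.im + γ.re * δ, ?_⟩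
    push_cast
    linear_combination h + om ^ n * hγ + (γ.re : ZBeta) * h'

/-- The digit sum `(2 + 8β)(1 + β² + ⋯ + β^(2N-2))`. -/
def twoEight : ℕ → ZBeta
  | 0 => 0
  | n + 1 => (2 + 8 * om) + om ^ 2 * twoEight n

lemma dig_mod {q : ℤ} (hcop : Int.gcd q 3 = 1) {z γ : ZBeta} {e : ℤ} (he : e % 3 = 2)
    (h : step q z + q * e = om * γ) : dig q z % 3 = 2 := by
  have hre := congrArg QuadraticAlgebra.re h
  rw [om_mul] at hre
  simp [step] at hre
  have h3 : (3 : ℤ) ∣ q * (e - dig q z) := ⟨γ.im - z.im, by linarith⟩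
  have hc : IsCoprime (3 : ℤ) q := (Int.isCoprime_iff_gcd_eq_one.2 hcop).symm
  have := hc.dvd_of_dvd_mul_left h3
  omega

/-- Two steps backwards along an orbit with conjugates in `[lo, hi]`: when the residues are those
of the digits `2, 8` and the conjugate is above `u`, the digits are `2, 8`, and the excess over `u`
is multiplied by `b⁻²`. -/
lemma two_back {q : ℤ} (hq : 0 < q) (hcop : Int.gcd q 3 = 1) {p0 p1 p2 : ZBeta}
    (h01 : step q p1 = p0) (h12 : step q p2 = p1)
    (hv1 : 0 ≤ val q p1 ∧ val q p1 < 1) (hv2 : 0 ≤ val q p2 ∧ val q p2 < 1)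
    (hc1 : -(65 + 25 * √7) / 12 ≤ cnj q p1) (hc2 : cnj q p2 ≤ (25 + 5 * √7) / 12)
    (hu : (7 - √7) / 12 < cnj q p0) {N : ℕ}
    (hd : ∃ γ, p0 + q * twoEight (N + 1) = om ^ (2 * (N + 1)) * γ) :
    (∃ γ, p2 + q * twoEight N = om ^ (2 * N) * γ) ∧
      (2 * √7 - 5) ^ 2 * (cnj q p2 - (7 - √7) / 12) = cnj q p0 - (7 - √7) / 12 := by
  have h1 := s7_lt
  have h2 := lt_s7
  have hs := s7_sq
  obtain ⟨γ, hγ⟩ := hd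
  simp only [twoEight] at hγ
  have c01 := cnj_step_eq hq p1
  have c12 := cnj_step_eq hq p2
  rw [h01] at c01
  rw [h12] at c12
  obtain ⟨a0, a1⟩ := dig_mem hv1
  obtain ⟨b0, b1⟩ := dig_mem hv2
  have e1 := mul_le_mul_of_nonneg_left hc1 (show 0 ≤ 2 * √7 - 5 by linarith)
  have e2 := mul_le_mul_of_nonneg_left hc2 (show 0 ≤ 2 * √7 - 5 by linarith)
  have hd0 : dig q p1 = 2 := by
    have hm : dig q p1 % 3 = 2 := by
      refine dig_mod (e := 2) hcop (by norm_num)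
        (γ := om ^ (2 * N + 1) * γ - q * (8 + om * twoEight N)) ?_
      rw [h01]; push_cast
      linear_combination hγ
    have : dig q p1 < 5 := by
      have : (dig q p1 : ℝ) < 5 := by nlinarith
      exact_mod_cast this
    omega
  have s01 := step_eq q p1
  rw [h01, hd0] at s01
  push_cast at s01
  have hp1 : p1 + q * 8 = om * (om ^ (2 * N) * γ - q * twoEight N) := by
    apply om_cancel
    linear_combination hγ - s01
  rw [hd0] at c01
  push_cast at c01
  have hd1 : dig q p2 = 8 := by
    have hm : dig q p2 % 3 = 2 := by
      refine dig_mod (e := 8) hcop (by norm_num)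
        (γ := om ^ (2 * N) * γ - q * twoEight N) ?_
      rw [h12]; exact_mod_cast hp1
    have : 5 < dig q p2 := by
      have : (5 : ℝ) < dig q p2 := by
        have hy1 : cnj q p1 < -8 := by nlinarith
        nlinarith
      exact_mod_cast this
    omega
  have s12 := step_eq q p2
  rw [h12, hd1] at s12
  push_cast at s12
  rw [hd1] at c12
  push_cast at c12
  refine ⟨⟨γ, om_cancel ?_⟩, ?_⟩
  · linear_combination hp1 - s12
  · rw [c12] at c01
    linear_combination -c01 + (√7 / 3 - 4) * hs

/-- Along a backward orbit `p` whose residues are those of `2, 8, 2, 8, …` up to order `2N`, the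
conjugate exceeds `u` by at most `3 b^(2N)`; here `3` is an upper bound of `hi - u`. -/
lemma growth {q : ℤ} (hq : 0 < q) (hcop : Int.gcd q 3 = 1) (N : ℕ) (p : ℕ → ZBeta)
    (hp : ∀ j, step q (p (j + 1)) = p j) (hv : ∀ j, 0 ≤ val q (p j) ∧ val q (p j) < 1)
    (hc : ∀ j, -(65 + 25 * √7) / 12 ≤ cnj q (p j) ∧ cnj q (p j) ≤ (25 + 5 * √7) / 12)
    (hu : (7 - √7) / 12 < cnj q (p 0))
    (hd : ∃ γ, p 0 + q * twoEight N = om ^ (2 * N) * γ) :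
    cnj q (p 0) - (7 - √7) / 12 ≤ ((2 * √7 - 5) ^ 2) ^ N * 3 := by
  have h1 := s7_lt
  have h2 := lt_s7
  induction N generalizing p with
  | zero => have := (hc 0).2; linarith
  | succ N ih =>
    obtain ⟨hd', he⟩ := two_back hq hcop (hp 0) (hp 1) (hv 1) (hv 2) (hc 1).1 (hc 2).2 hu hd
    have hb : 0 < (2 * √7 - 5) ^ 2 := pow_pos (by linarith) 2
    have hu' : (7 - √7) / 12 < cnj q (p 2) := by
      by_contra hcon
      push Not at hcon
      nlinarith
    have := ih (fun j => p (j + 2)) (fun j => hp (j + 2)) (fun j => hv (j + 2))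
      (fun j => hc (j + 2)) hu' hd'
    rw [← he, pow_succ' _ N, mul_assoc]
    exact mul_le_mul_of_nonneg_left this hb.le

lemma val_int (q P : ℤ) : val q ⟨P, 0⟩ = P / q := by simp [val]

lemma cnj_int (q P : ℤ) : cnj q ⟨P, 0⟩ = P / q := by simp [cnj]

lemma not_periodic_s4 {q P : ℤ} (hq : 0 < q) (hcop : Int.gcd q 3 = 1) {N : ℕ}
    (hx1 : (P : ℝ) / q < 1)
    (hxu : (7 - √7) / 12 + ((2 * √7 - 5) ^ 2) ^ N * 3 < (P : ℝ) / q)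
    (hd : ∃ γ, (P : ZBeta) + q * twoEight N = om ^ (2 * N) * γ) {ℓ : ℕ} (hℓ : 1 ≤ ℓ) :
    (betaMap (5 + 2 * √7))^[ℓ] ((P : ℝ) / q) ≠ (P : ℝ) / q := by
  intro hper
  have h1 := s7_lt
  have h2 := lt_s7
  have hpos : 0 ≤ ((2 * √7 - 5) ^ 2) ^ N * 3 := by positivity
  have hz : (step q)^[ℓ] ⟨P, 0⟩ = ⟨P, 0⟩ := by
    apply val_injective hq
    rw [val_iter hq, val_int, hper]
  have hv0 : 0 ≤ val q ⟨P, 0⟩ ∧ val q ⟨P, 0⟩ < 1 := by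
    rw [val_int]; exact ⟨by linarith, hx1⟩
  -- On a cycle of length `ℓ`, applying `step` `ℓ - 1` times goes one step back.
  set p : ℕ → ZBeta := fun j => (step q)^[(ℓ - 1) * j] ⟨P, 0⟩ with hpdef
  have hp : ∀ j, step q (p (j + 1)) = p j := by
    intro j
    simp only [hpdef]
    rw [← Function.iterate_succ_apply' (step q),
      show ((ℓ - 1) * (j + 1)).succ = (ℓ - 1) * j + ℓ by rw [mul_add]; omega,
      Function.iterate_add_apply, hz]
  have hv : ∀ j, 0 ≤ val q (p j) ∧ val q (p j) < 1 := fun j => val_iter_mem hq _ _ hv0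
  have hc : ∀ j, -(65 + 25 * √7) / 12 ≤ cnj q (p j) ∧ cnj q (p j) ≤ (25 + 5 * √7) / 12 := by
    intro j
    refine cnj_periodic_mem hq (hv j) hℓ ?_
    simp only [hpdef]
    rw [← Function.iterate_add_apply, add_comm, Function.iterate_add_apply, hz]
  have hp0 : p 0 = ⟨P, 0⟩ := by simp [hpdef]
  have := growth hq hcop N p hp hv hc (by rw [hp0, cnj_int]; linarith) (by
    rw [hp0]; exact hd)
  rw [hp0, cnj_int] at this
  linarith

/-- Rationals with denominator a power of `2` in a prescribed residue class modulo `β^(2N)` are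
dense. -/
lemma exists_rational {a c : ℝ} (hac : a < c) (N : ℕ) :
    ∃ (k : ℕ) (P : ℤ), a < (P : ℝ) / ((2 ^ k : ℤ) : ℝ) ∧ (P : ℝ) / ((2 ^ k : ℤ) : ℝ) < c ∧
      ∃ γ, (P : ZBeta) + ((2 ^ k : ℤ) : ZBeta) * twoEight N = om ^ (2 * N) * γ := by
  obtain ⟨s, γ, hs⟩ := exists_int_congr (twoEight N) (2 * N)
  obtain ⟨k, hk⟩ := pow_unbounded_of_one_lt (9 ^ N / (c - a)) (show (1 : ℝ) < 2 by norm_num)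
  have hk0 : (0 : ℝ) < 2 ^ k := by positivity
  have h9 : (0 : ℝ) < 9 ^ N := by positivity
  rw [div_lt_iff₀ (by linarith)] at hk
  set t : ℤ := ⌊(a + s) * 2 ^ k / 9 ^ N⌋ + 1 with ht
  have t1 : (a + s) * 2 ^ k / 9 ^ N < t := by
    rw [ht]; push_cast; exact Int.lt_floor_add_one _
  have t2 : (t : ℝ) ≤ (a + s) * 2 ^ k / 9 ^ N + 1 := by
    rw [ht]; push_cast; linarith [Int.floor_le ((a + s) * 2 ^ k / 9 ^ N)]
  rw [div_lt_iff₀ h9] at t1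
  have t2' : (t : ℝ) * 9 ^ N ≤ (a + s) * 2 ^ k + 9 ^ N := by
    have := mul_le_mul_of_nonneg_right t2 h9.le
    rwa [add_mul, div_mul_cancel₀ _ h9.ne', one_mul] at this
  refine ⟨k, -s * 2 ^ k + t * 9 ^ N, ?_, ?_, 2 ^ k * γ + t * (om - 10) ^ (2 * N), ?_⟩
  · push_cast
    rw [lt_div_iff₀ hk0]
    nlinarith
  · push_cast
    rw [div_lt_iff₀ hk0]
    nlinarith
  · have h3 : (9 : ZBeta) ^ N = om ^ (2 * N) * (om - 10) ^ (2 * N) := by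
      rw [← mul_pow, om_sq, pow_mul]; norm_num
    push_cast
    linear_combination (2 : ZBeta) ^ k * hs + (t : ZBeta) * h3

/-- For `β = 5 + 2√7` (the Pisot root of `X² - 10X - 3`, of norm `-3`), one has
`γ(β) = (7 - √7)/12`: the supremum of the set of `v ∈ [0,1]` such that every rational
`x ∈ (0, v]` whose reduced denominator is coprime to `3` has purely periodic β-expansion. -/
theorem gamma_five_add_two_sqrt_seven :
    sSup {v : ℝ | v ∈ Set.Icc (0 : ℝ) 1 ∧
      ∀ x : ℚ, 0 < x → (x : ℝ) ≤ v → Int.gcd (x.den : ℤ) 3 = 1 →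
        ∃ ℓ : ℕ, 1 ≤ ℓ ∧ (betaMap (5 + 2 * Real.sqrt 7))^[ℓ] (x : ℝ) = (x : ℝ)} =
      (7 - Real.sqrt 7) / 12 := by
  have h1 := s7_lt
  have h2 := lt_s7
  apply IsGreatest.csSup_eq
  refine ⟨⟨⟨by linarith, by linarith⟩, ?_⟩, ?_⟩
  · intro x hx0 hxu hcop
    have hxe : (x : ℝ) = ((x.num : ℤ) : ℝ) / ((x.den : ℤ) : ℝ) := by
      conv_lhs => rw [← Rat.num_div_den x]
      push_cast
      rfl
    -- The rational `x` differs from the irrational `(7 - √7)/12`.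
    have hne : (x : ℝ) ≠ (7 - √7) / 12 := by
      intro h
      have hirr : Irrational √7 := by
        have := Nat.Prime.irrational_sqrt (show Nat.Prime 7 by norm_num)
        simpa using this
      exact hirr ⟨7 - 12 * x, by push_cast; rw [h]; ring⟩
    have hlt := lt_of_le_of_ne hxu hne
    have hx0' : (0 : ℝ) < x := by exact_mod_cast hx0
    rw [hxe] at hlt hx0' ⊢
    exact periodic_of_lt (by exact_mod_cast x.den_pos) hcop hx0' hlt
  · rintro v ⟨⟨-, hv1⟩, hv⟩
    by_contra hcon
    push Not at hcon
    have hb1 : (2 * √7 - 5) ^ 2 < 1 := by nlinarith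
    obtain ⟨N, hN⟩ := exists_pow_lt_of_lt_one
      (show 0 < (v - (7 - √7) / 12) / 3 by linarith) hb1
    obtain ⟨k, P, hP1, hP2, hd⟩ := exists_rational
      (show (7 - √7) / 12 + ((2 * √7 - 5) ^ 2) ^ N * 3 < v by linarith) N
    have hpos : 0 ≤ ((2 * √7 - 5) ^ 2) ^ N * 3 := by positivity
    set x : ℚ := (P : ℚ) / ((2 ^ k : ℤ) : ℚ) with hx
    have hxe : (x : ℝ) = (P : ℝ) / ((2 ^ k : ℤ) : ℝ) := by rw [hx]; push_cast; rfl
    have hcop2 : IsCoprime ((2 : ℤ) ^ k) 3 := IsCoprime.pow_left ⟨-1, 1, by norm_num⟩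
    have hden : (x.den : ℤ) ∣ 2 ^ k := by
      have := Rat.den_dvd P (2 ^ k)
      rwa [Rat.divInt_eq_div, ← hx] at this
    have hx0 : 0 < x := by
      have : (0 : ℝ) < x := by rw [hxe]; linarith
      exact_mod_cast this
    obtain ⟨ℓ, hℓ, hper⟩ := hv x hx0 (by rw [hxe]; exact hP2.le)
      (Int.isCoprime_iff_gcd_eq_one.1 (hcop2.of_isCoprime_of_dvd_left hden))
    rw [hxe] at hper
    exact not_periodic_s4 (by positivity) (Int.isCoprime_iff_gcd_eq_one.1 hcop2)
      (by linarith) hP1 hd hℓ hper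
end
end

section
/- Let n ≥ 1 be a natural number and let α be a real number with 1/n ≤ α < 1. Then the set X(α, n) = { ∑_{i=0}^∞ a_i α^i : a : ℕ → ℕ with a_i ≤ n − 1 for all i } is exactly the closed interval [0, (n−1)/(1−α)]. Moreover, for any real α with 0 < α < 1 (without the lower bound 1/n), one has X(α, n) ⊆ [0, (n−1)/(1−α)] and both endpoints 0 and (n−1)/(1−α) belong to X(α, n). -/
/-!
The containment and the endpoints come from comparison with the geometric series with all digits
equal to `n - 1`. For `1 / n ≤ α`, every point `x` of the interval is expanded greedily: with
`M = (n - 1) / (1 - α)`, a remainder `r ∈ [0, M]` emits the digit `d = min (n - 1) ⌊r⌋` and is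
replaced by `(r - d) / α`. This stays in `[0, M]` (`greedy_mem`): if `d = n - 1` because
`r ≥ n - 1`, then `r - d ≤ M - (n - 1) = α M`; otherwise `r - d < 1 ≤ α M`, where the last
inequality is exactly `1 / n ≤ α`. After `k` steps `x` differs from its partial sum by `α ^ k`
times a bounded remainder, hence the series sums to `x`.
-/

noncomputable section

/-- The "cookie cutter" set `X(α, n)`: all sums `∑_{i=0}^∞ a_i α^i` with natural digits
`0 ≤ a_i ≤ n - 1`. -/
def cookieSet (α : ℝ) (n : ℕ) : Set ℝ :=
  {x : ℝ | ∃ a : ℕ → ℕ, (∀ i, a i ≤ n - 1) ∧ HasSum (fun i => (a i : ℝ) * α ^ i) x}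

/-- The greedy digit of a remainder `r`. -/
def greedyDigit (n : ℕ) (r : ℝ) : ℕ := min (n - 1) ⌊r⌋₊

/-- The `k`-th remainder of the greedy expansion of `x`, rescaled by `α ^ (-k)`. -/
def greedyRem (α : ℝ) (n : ℕ) (x : ℝ) : ℕ → ℝ
  | 0 => x
  | k + 1 => (greedyRem α n x k - greedyDigit n (greedyRem α n x k)) / α

/-- One greedy step preserves the interval `[0, (n - 1) / (1 - α)]`. -/
lemma greedy_mem {n : ℕ} (hn : 1 ≤ n) {α : ℝ} (hα0 : 0 < α) (hα1 : α < 1)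
    (h : 1 / (n : ℝ) ≤ α) {r : ℝ} (hr : r ∈ Set.Icc 0 (((n : ℝ) - 1) / (1 - α))) :
    (r - greedyDigit n r) / α ∈ Set.Icc 0 (((n : ℝ) - 1) / (1 - α)) := by
  obtain ⟨h0, hM⟩ := hr
  have hn0 : (0 : ℝ) < n := by exact_mod_cast hn
  have h1α : 0 < 1 - α := by linarith
  set M := ((n : ℝ) - 1) / (1 - α) with hMdef
  have hMeq : M * (1 - α) = n - 1 := div_mul_cancel₀ _ h1α.ne'
  have hnα : 1 ≤ α * n := (div_le_iff₀ hn0).1 h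
  have hαM : 1 ≤ M * α := by
    rw [hMdef, div_mul_eq_mul_div, le_div_iff₀ h1α]
    linarith
  have hfl : (⌊r⌋₊ : ℝ) ≤ r := Nat.floor_le h0
  have hd : (greedyDigit n r : ℝ) ≤ r :=
    le_trans (by exact_mod_cast min_le_right _ _) hfl
  refine ⟨div_nonneg (by linarith) hα0.le, ?_⟩
  rw [div_le_iff₀ hα0]
  rcases le_total (n - 1) ⌊r⌋₊ with hc | hc
  · rw [greedyDigit, min_eq_left hc, Nat.cast_sub hn, Nat.cast_one]
    linarith
  · rw [greedyDigit, min_eq_right hc]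
    linarith [Nat.lt_floor_add_one r]

lemma greedyRem_mem {n : ℕ} (hn : 1 ≤ n) {α : ℝ} (hα0 : 0 < α) (hα1 : α < 1)
    (h : 1 / (n : ℝ) ≤ α) {x : ℝ} (hx : x ∈ Set.Icc 0 (((n : ℝ) - 1) / (1 - α))) (k : ℕ) :
    greedyRem α n x k ∈ Set.Icc 0 (((n : ℝ) - 1) / (1 - α)) := by
  induction k with
  | zero => exact hx
  | succ k ih => exact greedy_mem hn hα0 hα1 h ih

lemma sum_greedyDigit {α : ℝ} (hα0 : 0 < α) (n : ℕ) (x : ℝ) (k : ℕ) :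
    ∑ i ∈ Finset.range k, (greedyDigit n (greedyRem α n x i) : ℝ) * α ^ i
      = x - α ^ k * greedyRem α n x k := by
  induction k with
  | zero => simp [greedyRem]
  | succ k ih =>
    rw [Finset.sum_range_succ, ih, greedyRem]
    field_simp
    ring

lemma Icc_subset_cookieSet {n : ℕ} (hn : 1 ≤ n) {α : ℝ} (hα0 : 0 < α) (hα1 : α < 1)
    (h : 1 / (n : ℝ) ≤ α) : Set.Icc 0 (((n : ℝ) - 1) / (1 - α)) ⊆ cookieSet α n := by
  intro x hx
  refine ⟨fun i => greedyDigit n (greedyRem α n x i), fun i => min_le_left _ _, ?_⟩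
  rw [hasSum_iff_tendsto_nat_of_nonneg (fun i => by positivity)]
  simp only [sum_greedyDigit hα0]
  have hz : Filter.Tendsto (fun k => α ^ k * greedyRem α n x k) Filter.atTop (nhds 0) := by
    have hg : Filter.Tendsto (fun k => α ^ k * (((n : ℝ) - 1) / (1 - α))) Filter.atTop
        (nhds 0) := by
      simpa using (tendsto_pow_atTop_nhds_zero_of_lt_one hα0.le hα1).mul_const
        (((n : ℝ) - 1) / (1 - α))
    refine squeeze_zero (fun k => ?_) (fun k => ?_) hg
    · exact mul_nonneg (by positivity) (greedyRem_mem hn hα0 hα1 h hx k).1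
    · exact mul_le_mul_of_nonneg_left (greedyRem_mem hn hα0 hα1 h hx k).2 (by positivity)
  simpa using hz.const_sub x

/-- Cookie Cantor Lemma: for `0 < α < 1` and `n ≥ 1`, the set `X(α, n)` is contained in
`[0, (n-1)/(1-α)]` and contains both endpoints; and if moreover `1/n ≤ α`, then
`X(α, n)` is exactly the interval `[0, (n-1)/(1-α)]`. -/
theorem cookie_cantor (n : ℕ) (hn : 1 ≤ n) (α : ℝ) (hα0 : 0 < α) (hα1 : α < 1) :
    (cookieSet α n ⊆ Set.Icc 0 (((n : ℝ) - 1) / (1 - α)) ∧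
      (0 : ℝ) ∈ cookieSet α n ∧ ((n : ℝ) - 1) / (1 - α) ∈ cookieSet α n) ∧
    (1 / (n : ℝ) ≤ α → cookieSet α n = Set.Icc 0 (((n : ℝ) - 1) / (1 - α))) := by
  have hgeo : HasSum (fun i : ℕ => ((n - 1 : ℕ) : ℝ) * α ^ i) (((n : ℝ) - 1) / (1 - α)) := by
    rw [Nat.cast_sub hn, Nat.cast_one, div_eq_mul_inv]
    exact (hasSum_geometric_of_lt_one hα0.le hα1).mul_left _
  have hsub : cookieSet α n ⊆ Set.Icc 0 (((n : ℝ) - 1) / (1 - α)) := by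
    rintro x ⟨a, ha, hs⟩
    refine ⟨hs.nonneg fun i => by positivity, hasSum_le (fun i => ?_) hs hgeo⟩
    exact mul_le_mul_of_nonneg_right (by exact_mod_cast ha i) (by positivity)
  refine ⟨⟨hsub, ⟨fun _ => 0, fun _ => Nat.zero_le _, ?_⟩, ⟨fun _ => n - 1, fun _ => le_rfl, hgeo⟩⟩,
    fun h => hsub.antisymm (Icc_subset_cookieSet hn hα0 hα1 h)⟩
  simpa using (hasSum_zero : HasSum (fun _ : ℕ => (0 : ℝ)) 0)
end
end
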